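/- Let $\mu$ be a finite Borel measure supported on the closed unit ball $B(0,1)\subset\mathbb{R}^2$, and let $\nu$ be a finite Borel measure supported on $[1/4,3/4]\times[-1,1]$. For $t\in(1,2)$ and $\delta\in(0,1/50]$, define the incidence count $\mathcal{I}_\delta(\mu,\nu) = (\mu\times\nu)(\{(p,q) : p \in T_q(\delta)\})$, where for $q = (\theta,r)$, $T_q(\delta)$ is the closed $\delta$-neighbourhood of the line $\pi_\theta^{-1}\{r\}$. Then $\mathcal{I}_\delta(\mu,\nu) \lesssim_t \delta\cdot\sqrt{I_{3-t}(\mu)\,I_t(\nu)}$, where $I_s(\lambda) = \iint |x-y|^{-s}\,d\lambda(x)\,d\lambda(y)$ is the $s$-dimensional Riesz energy. -/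

import Mathlib

/-!
Write `e_θ = (cos 2πθ, sin 2πθ)`, and identify `q = (θ, r)` with a line. Let `ρ_s(p, ·)` be `s⁻²`
times the indicator of the disc of radius `s` around `p`, and `m_s` its one-dimensional marginal,
which by rotation invariance is the same in every direction. The smoothed incidence function
`φ_s(p, q) = ∫ ρ_s(p, w) m_s(w · e_θ - r) dw` is nonnegative, and at least `1/s` when `p` lies within
`s/4` of the line `q`. Hence, with the dyadic `s` such that `4δ ≤ s < 8δ`,
`I_δ(μ, ν) ≤ s ∬ φ_s dμ dν` (`incid_le`), and it remains to bound `∬ φ_s dμ dν` by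
`√(I_{3-t}(μ) I_t(ν))`, uniformly in `s`.

Telescope `φ_s` over dyadic scales. As a function of `p`, `φ_s` is the convolution `m_s * m_s` at
`p · e_θ - r`, so the identity `a² - b² = (a + b) (a - b)` gives (`integral_kerA_kerB`)
`φ_s - φ_{2s} = ∫ A_s(p, w) B_s(q, w) dw`, where `A_s = ρ_s + ρ_{2s}` and
`B_s(q, w) = χ(w) (m_s - m_{2s})(w · e_θ - r)` is a wave of mean zero across the line, with a
Lipschitz cutoff `χ` that equals `1` near the unit disc. The Cauchy–Schwarz inequality with weights
`s^(t-1)` and `s^(1-t)` (`integral_phi_le`) then separates the two measures, and leaves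
`∑ s^(t-1) ∫ (∫ A_s dμ)²` and `∑ s^(1-t) ∫ (∫ B_s dν)²`.

Expanding the squares (`energy_le`) reduces these to correlations of kernels. For `A_s` the
correlation at `p, p'` is `O(s⁻²)` and vanishes unless `s ≳ |p - p'|`; the weighted sum is
`O(|p - p'|^(-(3-t)))` (`sum_kerA_le`). For `B_s` and `D = |q - q'|` the correlation is `O(1/s)`
always, and `O(s/D²)` when `s < D`, because in the coordinates `(w · e_θ, w · e_θ')` the two waves
are a product of mean-zero functions, up to the variation of the cutoff
(`abs_integral_kerB_le_of_transversal`, `abs_integral_kerB_le_dist`). Since `1 < t < 2`, the weighted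
sum is `O(D^(-t))` (`sum_kerB_le`). The coarsest term `φ_1` is bounded, and masses are controlled by
energies (`mass_sq_le`).

The bound `|sin 2π(θ - θ')| ≳ |θ - θ'|` needs `|θ - θ'| ≤ 1/4`, so the range `[1/4, 3/4]` of `θ` is
cut in two.
-/

open MeasureTheory Metric Real ENNReal

noncomputable section

abbrev E2 := EuclideanSpace ℝ (Fin 2)

/-- The orthogonal projection `π_θ(z) = z · (cos 2πθ, sin 2πθ)`. -/
def proj (θ : ℝ) (z : E2) : ℝ :=
  z 0 * Real.cos (2 * π * θ) + z 1 * Real.sin (2 * π * θ)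

/-- The line `ℓ_{θ,r} = π_θ⁻¹{r}`. -/
def line (θ r : ℝ) : Set E2 := {w | proj θ w = r}

/-- The `δ`-tube `T_q(δ)` around the line with parameter `q = (θ, r)`. -/
def tube (q : E2) (δ : ℝ) : Set E2 := {z | infDist z (line (q 0) (q 1)) ≤ δ}

/-- The `s`-dimensional Riesz energy `I_s(λ) = ∬ |x-y|^{-s} dλ dλ`. -/
def riesz (s : ℝ) (μ : Measure E2) : ℝ≥0∞ := ∫⁻ x, ∫⁻ y, edist x y ^ (-s) ∂μ ∂μ

/-- The `δ`-incidence count between a measure `μ` on points and a measure `ν` on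
(parameters of) lines. -/
def incid (δ : ℝ) (μ ν : Measure E2) : ℝ≥0∞ :=
  (μ.prod ν) {pq : E2 × E2 | pq.1 ∈ tube pq.2 δ}

/-! ### Dyadic sums -/

lemma half_rpow (j : ℕ) (b : ℝ) :
    (((1:ℝ)/2)^(j+1))^b = ((1/2:ℝ)^b)^(j+1) := by
  rw [Real.rpow_pow_comm (by norm_num)]

/-- A sum of negative powers over the dyadic scales above `x` is dominated by its smallest scale. -/
lemma sum_large {b : ℝ} (hb : 0 < b) : ∃ C : ℝ, 0 < C ∧ ∀ (x : ℝ), 0 < x → ∀ n : ℕ,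
    ∑ j ∈ Finset.range n, (if x ≤ ((1:ℝ)/2)^(j+1) then (((1:ℝ)/2)^(j+1))^(-b) else 0)
      ≤ C * x^(-b) := by
  set c : ℝ := (1/2:ℝ)^(-b) with hc
  have hc1 : 1 < c := Real.one_lt_rpow_of_pos_of_lt_one_of_neg (by norm_num) (by norm_num)
    (by linarith)
  have hc0 : 0 < c - 1 := by linarith
  refine ⟨c / (c-1), by positivity, fun x hx n => ?_⟩
  induction n with
  | zero => simp; positivity
  | succ n ih =>
    by_cases h : x ≤ ((1:ℝ)/2)^(n+1)
    · calc _ ≤ ∑ j ∈ Finset.range (n+1), c^(j+1) := by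
            refine Finset.sum_le_sum fun j _ => ?_
            rw [half_rpow]
            split_ifs
            · exact le_rfl
            · positivity
        _ = c * ((c^(n+1) - 1)/(c-1)) := by
            rw [← geom_sum_eq hc1.ne', Finset.mul_sum]
            exact Finset.sum_congr rfl fun j _ => by ring
        _ ≤ c / (c-1) * c^(n+1) := by
            rw [mul_div_assoc', div_mul_eq_mul_div]
            gcongr
            linarith
        _ ≤ c / (c-1) * x^(-b) := by
            gcongr
            rw [hc, ← half_rpow]
            exact Real.rpow_le_rpow_of_nonpos hx h (by linarith)
    · rw [Finset.sum_range_succ, if_neg h, add_zero]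
      exact ih

/-- A sum of positive powers over the dyadic scales below `x` is dominated by its largest scale. -/
lemma sum_small {b : ℝ} (hb : 0 < b) : ∃ C : ℝ, 0 < C ∧ ∀ n : ℕ, ∀ (x : ℝ), 0 < x →
    ∑ j ∈ Finset.range n, (if ((1:ℝ)/2)^(j+1) < x then (((1:ℝ)/2)^(j+1))^b else 0)
      ≤ C * x^b := by
  set c : ℝ := (1/2:ℝ)^b with hc
  have hcp : 0 < c := by positivity
  have hc1 : c < 1 := Real.rpow_lt_one (by norm_num) (by norm_num) hb
  have hc0 : 0 < 1 - c := by linarith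
  refine ⟨1 / (1-c), by positivity, fun n => ?_⟩
  induction n with
  | zero => intro x hx; simp; positivity
  | succ n ih =>
    intro x hx
    by_cases h : 1/2 < x
    · calc _ ≤ ∑ j ∈ Finset.range (n+1), c^(j+1) := by
            refine Finset.sum_le_sum fun j _ => ?_
            rw [half_rpow]
            split_ifs
            · exact le_rfl
            · positivity
        _ = c * ((1 - c^(n+1)) / (1-c)) := by
            rw [← neg_div_neg_eq, neg_sub, neg_sub, ← geom_sum_eq hc1.ne, Finset.mul_sum]
            exact Finset.sum_congr rfl fun j _ => by ring
        _ ≤ c * (1/(1-c)) := by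
            have : 0 < c^(n+1) := by positivity
            gcongr
            linarith
        _ ≤ 1/(1-c) * x^b := by
            rw [mul_comm]
            gcongr
            exact Real.rpow_le_rpow (by norm_num) h.le hb.le
    -- if the scale `1/2` does not contribute, halve all scales
    · have h2 := ih (2*x) (by positivity)
      have h3 := mul_le_mul_of_nonneg_left h2 hcp.le
      have h4 : c * (1/(1-c) * (2*x)^b) = 1/(1-c) * x^b := by
        rw [Real.mul_rpow (by norm_num) hx.le]
        have : c * 2^b = 1 := by
          rw [hc, ← Real.mul_rpow (by norm_num) (by norm_num)]; norm_num
        linear_combination (1/(1-c) * x^b) * this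
      rw [h4, Finset.mul_sum] at h3
      refine le_trans (le_of_eq ?_) h3
      rw [Finset.sum_range_succ', zero_add, pow_one, if_neg h, add_zero]
      refine Finset.sum_congr rfl fun j _ => ?_
      have e : ((1:ℝ)/2)^(j+1+1) < x ↔ ((1:ℝ)/2)^(j+1) < 2*x := by
        rw [pow_succ _ (j+1)]
        constructor <;> intro _ <;> linarith
      simp only [e, half_rpow, ← hc, pow_succ c (j+1)]
      split_ifs <;> ring

/-! ### Change of variables -/

/-- The linear form `w ↦ w · e_θ`, on `ℝ × ℝ` instead of `E2`. -/
def lin (θ : ℝ) (w : ℝ × ℝ) : ℝ := w.1 * Real.cos (2*π*θ) + w.2 * Real.sin (2*π*θ)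

@[fun_prop] lemma continuous_lin (θ : ℝ) : Continuous (lin θ) := by unfold lin; fun_prop

/-- `w ↦ (w · e_θ, w · e_θ')` has determinant `sin 2π(θ' - θ)`. -/
lemma map_lin {θ θ' : ℝ} (h : Real.sin (2*π*(θ'-θ)) ≠ 0) :
    Measure.map (fun w => (lin θ w, lin θ' w)) (volume : Measure (ℝ×ℝ)) =
      ENNReal.ofReal |(Real.sin (2*π*(θ'-θ)))⁻¹| • volume := by
  set M : Matrix (Fin 2) (Fin 2) ℝ := !![Real.cos (2*π*θ), Real.sin (2*π*θ);
    Real.cos (2*π*θ'), Real.sin (2*π*θ')] with hM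
  have hdet : M.det = Real.sin (2*π*(θ'-θ)) := by
    rw [hM, Matrix.det_fin_two_of, mul_sub, Real.sin_sub]; ring
  have h1 := Real.map_matrix_volume_pi_eq_smul_volume_pi (M := M) (by rw [hdet]; exact h)
  have h2 := volume_preserving_finTwoArrow ℝ
  have e : (fun w : ℝ×ℝ => (lin θ w, lin θ' w)) =
      (MeasurableEquiv.finTwoArrow (α := ℝ)) ∘ (Matrix.toLin' M) ∘
        (MeasurableEquiv.finTwoArrow (α := ℝ)).symm := by
    funext w
    simp [hM, lin, MeasurableEquiv.finTwoArrow, Matrix.vecHead, Matrix.vecTail, mul_comm]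
  have hm : Measurable (Matrix.toLin' M) :=
    (LinearMap.continuous_of_finiteDimensional _).measurable
  rw [e, ← Measure.map_map (MeasurableEquiv.measurable _) (hm.comp (MeasurableEquiv.measurable _)),
    ← Measure.map_map hm (MeasurableEquiv.measurable _), (h2.symm _).map_eq, h1, Measure.map_smul,
    h2.map_eq, hdet]

lemma integral_lin {θ θ' : ℝ} (h : Real.sin (2*π*(θ'-θ)) ≠ 0) {H : ℝ × ℝ → ℝ}
    (hH : Measurable H) :
    ∫ w : ℝ×ℝ, H (lin θ w, lin θ' w) = |(Real.sin (2*π*(θ'-θ)))⁻¹| * ∫ z, H z := by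
  have := integral_map (μ := (volume : Measure (ℝ×ℝ)))
    (φ := fun w => (lin θ w, lin θ' w)) (f := H) (by fun_prop)
    hH.aestronglyMeasurable
  rw [← this, map_lin h, integral_smul_measure, ENNReal.toReal_ofReal (abs_nonneg _), smul_eq_mul]

lemma sin_quarter (θ : ℝ) : Real.sin (2*π*(θ+1/4-θ)) = 1 := by
  rw [show 2*π*(θ+1/4-θ) = π/2 by ring, Real.sin_pi_div_two]

lemma cos_add_quarter (θ : ℝ) : Real.cos (2*π*(θ+1/4)) = - Real.sin (2*π*θ) := by
  rw [show 2*π*(θ+1/4) = 2*π*θ + π/2 by ring, Real.cos_add_pi_div_two]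

lemma sin_add_quarter (θ : ℝ) : Real.sin (2*π*(θ+1/4)) = Real.cos (2*π*θ) := by
  rw [show 2*π*(θ+1/4) = 2*π*θ + π/2 by ring, Real.sin_add_pi_div_two]

/-! ### Fubini -/

/-- Fubini for bounded kernels: the pairing of the averages of two measures is the double average
of the correlation of the kernels. -/
lemma fub {P Q W : Type*} [MeasurableSpace P] [MeasurableSpace Q] [MeasurableSpace W]
    (μ : Measure P) (ν : Measure Q) (κ : Measure W) [IsFiniteMeasure μ] [IsFiniteMeasure ν]
    [IsFiniteMeasure κ] {A : P → W → ℝ} {B : Q → W → ℝ} {a b : ℝ}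
    (hA : Measurable (Function.uncurry A)) (hB : Measurable (Function.uncurry B))
    (ha : ∀ p w, |A p w| ≤ a) (hb : ∀ q w, |B q w| ≤ b) :
    Integrable (fun x : P × Q => ∫ w, A x.1 w * B x.2 w ∂κ) (μ.prod ν) ∧
    Integrable (fun w => (∫ p, A p w ∂μ) * (∫ q, B q w ∂ν)) κ ∧
    ∫ x, (∫ w, A x.1 w * B x.2 w ∂κ) ∂(μ.prod ν) =
      ∫ w, (∫ p, A p w ∂μ) * (∫ q, B q w ∂ν) ∂κ := by
  have hF : Integrable (Function.uncurry fun (x : P × Q) (w : W) => A x.1 w * B x.2 w)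
      ((μ.prod ν).prod κ) := by
    refine Integrable.of_bound (C := a * b) ?_ (Filter.Eventually.of_forall fun y => ?_)
    · apply Measurable.aestronglyMeasurable
      exact (hA.comp (by fun_prop : Measurable fun y : (P×Q)×W => (y.1.1, y.2))).mul
        (hB.comp (by fun_prop : Measurable fun y : (P×Q)×W => (y.1.2, y.2)))
    · simp only [Function.uncurry, norm_mul, Real.norm_eq_abs]
      exact mul_le_mul (ha _ _) (hb _ _) (abs_nonneg _) ((abs_nonneg _).trans (ha y.1.1 y.2))
  have h2 : ∀ w, ∫ x : P × Q, A x.1 w * B x.2 w ∂(μ.prod ν)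
      = (∫ p, A p w ∂μ) * (∫ q, B q w ∂ν) := fun w =>
    integral_prod_mul (μ := μ) (ν := ν) (fun p => A p w) (fun q => B q w)
  refine ⟨hF.integral_prod_left, ?_, ?_⟩
  · simpa [Function.uncurry, h2] using hF.integral_prod_right
  · rw [integral_integral_swap hF]
    simp only [h2]

/-! ### Kernels -/

/-- The indicator of the disc of radius `s` around `p`, divided by `s²`. -/
def rho (s : ℝ) (p : E2) (w : ℝ × ℝ) : ℝ :=
  if (p 0 - w.1)^2 + (p 1 - w.2)^2 ≤ s^2 then 1/s^2 else 0

/-- The one-dimensional marginal of `rho s`, the same in every direction. For `s² < u²` the square root is `0`. -/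
def mar (s u : ℝ) : ℝ := 2 / s^2 * √(s^2 - u^2)

/-- The difference of the marginals at scales `s` and `2s`; it has mean zero. -/
def eta (s u : ℝ) : ℝ := mar s u - mar (2*s) u

/-- A Lipschitz cutoff to a bounded region, for the sup norm of `ℝ × ℝ`. -/
def cut (w : ℝ × ℝ) : ℝ := max 0 (min 1 (3 - ‖w‖))

/-- The kernel averaging a measure on points at scale `s`. -/
def kerA (s : ℝ) (p : E2) (w : ℝ × ℝ) : ℝ := rho s p w + rho (2*s) p w

/-- The localised mean-zero plane wave at scale `s` attached to the line with parameter `q`. -/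
def kerB (s : ℝ) (q : E2) (w : ℝ × ℝ) : ℝ := cut w * eta s (lin (q 0) w - q 1)

/-- Lebesgue measure on the square `[-3,3]²`. -/
def kap : Measure (ℝ × ℝ) := volume.restrict (closedBall 0 3)

instance : IsFiniteMeasure kap := by
  unfold kap
  exact isFiniteMeasure_restrict.2 (isCompact_closedBall _ _).measure_lt_top.ne

@[fun_prop] lemma continuous_mar (s : ℝ) : Continuous (mar s) := by unfold mar; fun_prop
@[fun_prop] lemma continuous_eta (s : ℝ) : Continuous (eta s) := by unfold eta; fun_prop
@[fun_prop] lemma continuous_cut : Continuous cut := by unfold cut; fun_prop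

lemma mar_nonneg (s u : ℝ) : 0 ≤ mar s u := by unfold mar; positivity

lemma mar_neg (s u : ℝ) : mar s (-u) = mar s u := by simp [mar]

lemma mar_le {s : ℝ} (hs : 0 < s) (u : ℝ) : mar s u ≤ 2/s := by
  have : √(s^2 - u^2) ≤ s := Real.sqrt_le_iff.2 ⟨hs.le, by nlinarith [sq_nonneg u]⟩
  calc mar s u ≤ 2/s^2 * s := by unfold mar; gcongr
    _ = 2/s := by field_simp

lemma mar_eq_zero {s u : ℝ} (hs : 0 < s) (h : s ≤ |u|) : mar s u = 0 := by
  have : s^2 ≤ u^2 := by rw [← sq_abs u]; gcongr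
  unfold mar
  rw [Real.sqrt_eq_zero_of_nonpos (by linarith), mul_zero]

lemma le_mar {s u : ℝ} (hs : 0 < s) (h : |u| ≤ 3/4*s) : 1/s ≤ mar s u := by
  have h1 : u^2 ≤ (3/4*s)^2 := by rw [← sq_abs u]; gcongr
  have : s/2 ≤ √(s^2 - u^2) := Real.le_sqrt_of_sq_le (by nlinarith)
  calc 1/s = 2/s^2 * (s/2) := by field_simp
    _ ≤ _ := by unfold mar; gcongr

lemma mar_scale {s : ℝ} (hs : 0 < s) (u : ℝ) : mar s u = s⁻¹ * mar 1 (u/s) := by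
  have : s^2 - u^2 = s^2 * (1^2 - (u/s)^2) := by field_simp
  unfold mar
  rw [this, Real.sqrt_mul (by positivity), Real.sqrt_sq hs.le]
  field_simp

lemma integral_mar {s : ℝ} (hs : 0 < s) : ∫ u, mar s u = ∫ u, mar 1 u := by
  simp_rw [mar_scale hs, integral_const_mul]
  rw [Measure.integral_comp_div (mar 1) s, abs_of_pos hs, smul_eq_mul, inv_mul_cancel_left₀ hs.ne']

lemma integrable_of_support {f : ℝ → ℝ} (hf : Continuous f) {s : ℝ}
    (h : ∀ u, s < |u| → f u = 0) : Integrable f := by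
  refine hf.integrable_of_hasCompactSupport
    (HasCompactSupport.intro (isCompact_closedBall (0:ℝ) s) fun u hu => h u ?_)
  simpa using hu

lemma integrable_mar {s : ℝ} (hs : 0 < s) : Integrable (mar s) :=
  integrable_of_support (continuous_mar s) fun _ h => mar_eq_zero hs h.le

lemma integral_eta {s : ℝ} (hs : 0 < s) : ∫ u, eta s u = 0 := by
  unfold eta
  rw [integral_sub (integrable_mar hs) (integrable_mar (by positivity)), integral_mar hs,
    integral_mar (by positivity : 0 < 2*s), sub_self]

lemma abs_eta_le {s : ℝ} (hs : 0 < s) (u : ℝ) : |eta s u| ≤ 2/s := by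
  have h1 := mar_le hs u
  have h2 := mar_le (by positivity : 0 < 2*s) u
  have h3 : 2/(2*s) ≤ 2/s := by gcongr; linarith
  unfold eta
  rw [abs_le]
  constructor <;> linarith [mar_nonneg s u, mar_nonneg (2*s) u]

lemma eta_eq_zero {s u : ℝ} (hs : 0 < s) (h : 2*s ≤ |u|) : eta s u = 0 := by
  unfold eta
  rw [mar_eq_zero hs (by linarith), mar_eq_zero (by positivity) h, sub_self]

lemma cut_nonneg (w) : 0 ≤ cut w := le_max_left _ _
lemma cut_le_one (w) : cut w ≤ 1 := max_le zero_le_one (min_le_left _ _)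
lemma cut_eq_one {w} (h : ‖w‖ ≤ 2) : cut w = 1 := by
  unfold cut
  rw [min_eq_left (by linarith), max_eq_right zero_le_one]
lemma cut_eq_zero {w} (h : 3 ≤ ‖w‖) : cut w = 0 := by
  unfold cut
  rw [max_eq_left ((min_le_right _ _).trans (by linarith))]

lemma abs_cut_sub_le (w w') : |cut w - cut w'| ≤ ‖w - w'‖ := by
  unfold cut
  refine (abs_max_sub_max_le_max _ _ _ _).trans (max_le (by simp) ?_)
  refine (abs_min_sub_min_le_max _ _ _ _).trans (max_le (by simp) ?_)
  rw [show 3 - ‖w‖ - (3 - ‖w'‖) = ‖w'‖ - ‖w‖ by ring, norm_sub_rev]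
  exact abs_norm_sub_norm_le _ _

lemma abs_cut_sq_sub_le (w w') : |cut w ^ 2 - cut w' ^ 2| ≤ 2 * ‖w - w'‖ := by
  rw [sq_sub_sq, abs_mul]
  refine mul_le_mul ?_ (abs_cut_sub_le _ _) (abs_nonneg _) zero_le_two
  rw [abs_of_nonneg (add_nonneg (cut_nonneg _) (cut_nonneg _))]
  linarith [cut_le_one w, cut_le_one w']

lemma measurable_rho (s : ℝ) : Measurable (Function.uncurry (rho s)) := by
  unfold rho Function.uncurry
  refine Measurable.ite (measurableSet_le (by fun_prop) (by fun_prop)) ?_ ?_ <;> fun_prop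

lemma rho_nonneg (s p w) : 0 ≤ rho s p w := by
  unfold rho; split_ifs <;> positivity

lemma rho_le (s p w) : rho s p w ≤ 1/s^2 := by
  unfold rho; split_ifs
  · exact le_rfl
  · positivity

lemma measurable_kerA (s : ℝ) : Measurable (Function.uncurry (kerA s)) := by
  exact (measurable_rho s).add (measurable_rho (2*s))

lemma measurable_wave {f : ℝ → ℝ} (hf : Continuous f) :
    Measurable (Function.uncurry fun (q : E2) (w : ℝ × ℝ) => f (lin (q 0) w - q 1)) := by
  apply Continuous.measurable
  unfold Function.uncurry lin
  fun_prop

lemma measurable_kerB (s : ℝ) : Measurable (Function.uncurry (kerB s)) :=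
  (continuous_cut.measurable.comp measurable_snd).mul (measurable_wave (continuous_eta s))

lemma kerA_nonneg (s p w) : 0 ≤ kerA s p w := add_nonneg (rho_nonneg _ _ _) (rho_nonneg _ _ _)

lemma kerA_le {s : ℝ} (hs : 0 < s) (p w) : kerA s p w ≤ 2/s^2 := by
  have h1 := rho_le s p w
  have h2 := rho_le (2*s) p w
  have h3 : 1/(2*s)^2 ≤ 1/s^2 := by gcongr; linarith
  have h4 : 2/s^2 = 1/s^2 + 1/s^2 := by ring
  unfold kerA; linarith

lemma abs_kerB_le {s : ℝ} (hs : 0 < s) (q w) : |kerB s q w| ≤ 2/s := by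
  unfold kerB
  rw [abs_mul, abs_of_nonneg (cut_nonneg w)]
  calc _ ≤ 1 * (2/s) := by
        gcongr
        · exact cut_le_one w
        · exact abs_eta_le hs _
    _ = _ := one_mul _

lemma rho_support {s : ℝ} (hs : 0 < s) {p w} (h : rho s p w ≠ 0) :
    |p 0 - w.1| ≤ s ∧ |p 1 - w.2| ≤ s := by
  unfold rho at h
  split_ifs at h with h1
  · exact ⟨abs_le_of_sq_le_sq (by nlinarith [sq_nonneg (p 1 - w.2)]) hs.le,
      abs_le_of_sq_le_sq (by nlinarith [sq_nonneg (p 0 - w.1)]) hs.le⟩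
  · exact absurd rfl h

lemma kerA_support {s : ℝ} (hs : 0 < s) {p w} (h : kerA s p w ≠ 0) :
    |p 0 - w.1| ≤ 2*s ∧ |p 1 - w.2| ≤ 2*s ∧ (p 0 - w.1)^2 + (p 1 - w.2)^2 ≤ (2*s)^2 := by
  have key : (p 0 - w.1)^2 + (p 1 - w.2)^2 ≤ (2*s)^2 := by
    by_contra hc
    apply h
    unfold kerA rho
    rw [if_neg hc, if_neg (by nlinarith), add_zero]
  exact ⟨abs_le_of_sq_le_sq (by nlinarith [sq_nonneg (p 1 - w.2)]) (by positivity),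
      abs_le_of_sq_le_sq (by nlinarith [sq_nonneg (p 0 - w.1)]) (by positivity), key⟩

/-! ### Projections of discs -/

lemma volume_sq_le (c a : ℝ) :
    (volume : Measure ℝ).real {v : ℝ | (c - v)^2 ≤ a} = 2 * √a := by
  rcases lt_or_ge a 0 with h | h
  · have : {v : ℝ | (c-v)^2 ≤ a} = ∅ := by
      ext v; simp only [Set.mem_ofPred_eq, Set.mem_empty_iff_false, iff_false]
      nlinarith [sq_nonneg (c-v)]
    rw [this, Real.sqrt_eq_zero_of_nonpos h.le]; simp
  · have : {v : ℝ | (c-v)^2 ≤ a} = Set.Icc (c - √a) (c + √a) := by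
      ext v
      rw [Set.mem_ofPred_eq, Real.sq_le h, Set.mem_Icc]
      constructor <;> rintro ⟨_, _⟩ <;> constructor <;> linarith
    rw [this, Measure.real, Real.volume_Icc, ENNReal.toReal_ofReal (by linarith [Real.sqrt_nonneg a])]
    ring

/-- The average of a plane wave over a disc is the convolution of its profile with the marginal
of the disc. -/
lemma integral_rho_mul {s : ℝ} (hs : 0 < s) (p : E2) (θ : ℝ) {F : ℝ → ℝ} (hF : Continuous F) :
    ∫ w, rho s p w * F (lin θ w) = ∫ u, mar s (proj θ p - u) * F u := by
  set x := proj θ p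
  set y := proj (θ+1/4) p with hy
  set H : ℝ × ℝ → ℝ := fun z => (if (x - z.1)^2 + (y-z.2)^2 ≤ s^2 then 1/s^2 else 0) * F z.1 with hH
  have hS : MeasurableSet {z : ℝ × ℝ | (x - z.1)^2 + (y-z.2)^2 ≤ s^2} :=
    measurableSet_le (by fun_prop) (by fun_prop)
  have hHm : Measurable H :=
    (Measurable.ite hS measurable_const measurable_const).mul (by fun_prop)
  have e1 : ∀ w, rho s p w * F (lin θ w) = H (lin θ w, lin (θ+1/4) w) := by
    intro w
    -- the disc is rotation invariant
    have : (p 0 - w.1)^2 + (p 1 - w.2)^2 = (x - lin θ w)^2 + (y - lin (θ+1/4) w)^2 := by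
      simp only [x, y, proj, lin, cos_add_quarter, sin_add_quarter]
      linear_combination (-(p 0 - w.1)^2 - (p 1 - w.2)^2) * Real.sin_sq_add_cos_sq (2*π*θ)
    simp only [hH, rho, this]
  have hi : Integrable H := by
    obtain ⟨C, hC⟩ := (isCompact_closedBall x s).exists_bound_of_continuousOn hF.continuousOn
    have hK : Integrable (Set.indicator (closedBall x s ×ˢ closedBall y s)
        (fun _ => 1/s^2 * C)) (volume : Measure (ℝ×ℝ)) := by
      rw [integrable_indicator_iff (measurableSet_closedBall.prod measurableSet_closedBall)]
      exact integrableOn_const (((isCompact_closedBall x s).prod (isCompact_closedBall y s)).measure_lt_top.ne)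
    refine hK.mono' hHm.aestronglyMeasurable (Filter.Eventually.of_forall fun z => ?_)
    by_cases h : (x - z.1)^2 + (y-z.2)^2 ≤ s^2
    · have h1 : z.1 ∈ closedBall x s := by
        rw [mem_closedBall, dist_comm, Real.dist_eq]
        exact abs_le_of_sq_le_sq (by nlinarith [sq_nonneg (y-z.2)]) hs.le
      have h2 : z.2 ∈ closedBall y s := by
        rw [mem_closedBall, dist_comm, Real.dist_eq]
        exact abs_le_of_sq_le_sq (by nlinarith [sq_nonneg (x-z.1)]) hs.le
      rw [Set.indicator_of_mem (Set.mk_mem_prod h1 h2)]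
      simp only [hH, if_pos h, norm_mul]
      rw [Real.norm_of_nonneg (by positivity)]
      gcongr
      exact hC _ h1
    · simp only [hH, if_neg h, zero_mul, norm_zero]
      refine Set.indicator_nonneg (fun _ _ => ?_) _
      have := (norm_nonneg _).trans (hC x (by simp [hs.le]))
      positivity
  simp_rw [e1]
  rw [integral_lin (by rw [sin_quarter]; norm_num) hHm, sin_quarter, Measure.volume_eq_prod,
    integral_prod _ hi]
  simp only [inv_one, abs_one, one_mul, hH, integral_mul_const]
  refine integral_congr_ae (Filter.Eventually.of_forall fun u => ?_)
  simp only
  congr 1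
  have e2 : ∀ v, (if (x-u)^2 + (y-v)^2 ≤ s^2 then 1/s^2 else 0)
      = Set.indicator {v | (y-v)^2 ≤ s^2 - (x-u)^2} (fun _ => 1/s^2) v := by
    intro v
    simp only [Set.indicator, Set.mem_ofPred_eq, le_sub_iff_add_le']
  simp_rw [e2]
  rw [integral_indicator_const _ (measurableSet_le (by fun_prop) (by fun_prop)), volume_sq_le]
  simp only [mar, smul_eq_mul]
  ring

/-! ### Telescoping over scales -/

/-- The marginal at scale `s'` along the line `q`, averaged over the disc of radius `s` at `p`. -/
def phi (s s' : ℝ) (p q : E2) : ℝ := ∫ w, rho s p w * mar s' (lin (q 0) w - q 1) ∂kap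

lemma norm_le_of_near {p : E2} (hp : ‖p‖ ≤ 1) {s : ℝ} (hs : s ≤ 1) {w : ℝ × ℝ}
    (h0 : |p 0 - w.1| ≤ s) (h1 : |p 1 - w.2| ≤ s) : ‖w‖ ≤ 2 := by
  have a0 := (PiLp.norm_apply_le p 0).trans hp
  have a1 := (PiLp.norm_apply_le p 1).trans hp
  rw [Real.norm_eq_abs] at a0 a1
  rw [abs_le] at *
  refine max_le ?_ ?_ <;> rw [Real.norm_eq_abs, abs_le] <;> constructor <;> linarith

lemma phi_eq {s s' : ℝ} (hs : 0 < s) (hs1 : s ≤ 1) {p : E2} (hp : ‖p‖ ≤ 1) (q : E2) :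
    phi s s' p q = ∫ u, mar s (proj (q 0) p - u) * mar s' (u - q 1) := by
  rw [← integral_rho_mul hs p (q 0) (F := fun u => mar s' (u - q 1)) (by fun_prop)]
  refine setIntegral_eq_integral_of_forall_compl_eq_zero fun w hw => ?_
  by_contra h
  obtain ⟨h0, h1⟩ := rho_support hs (left_ne_zero_of_mul h)
  apply hw
  rw [mem_closedBall_zero_iff]
  linarith [norm_le_of_near hp hs1 h0 h1]

/-- Both sides are convolutions of the two marginals, and convolution commutes. -/
lemma phi_symm {s s' : ℝ} (hs : 0 < s) (hs1 : s ≤ 1) (hs' : 0 < s') (hs1' : s' ≤ 1)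
    {p : E2} (hp : ‖p‖ ≤ 1) (q : E2) : phi s s' p q = phi s' s p q := by
  rw [phi_eq hs hs1 hp, phi_eq hs' hs1' hp, ← integral_sub_left_eq_self _ volume (proj (q 0) p + q 1)]
  refine integral_congr_ae (Filter.Eventually.of_forall fun u => ?_)
  simp only
  rw [mul_comm]
  congr 2 <;> ring

lemma integrable_rho_mar {s s' : ℝ} (hs' : 0 < s') (p q : E2) :
    Integrable (fun w => rho s p w * mar s' (lin (q 0) w - q 1)) kap := by
  refine Integrable.of_bound (C := 1/s^2 * (2/s')) ?_ (Filter.Eventually.of_forall fun w => ?_)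
  · exact (((measurable_rho s).of_uncurry_left).mul (by fun_prop)).aestronglyMeasurable
  · rw [Real.norm_of_nonneg (mul_nonneg (rho_nonneg _ _ _) (mar_nonneg _ _))]
    exact mul_le_mul (rho_le _ _ _) (mar_le hs' _) (mar_nonneg _ _) (by positivity)

/-- The increment of `phi` between two scales factors as `a² - b² = (a + b) (a - b)`: the mixed terms
cancel by `phi_symm`. The cutoff equals `1` on the support of the first kernel. -/
lemma integral_kerA_kerB {s : ℝ} (hs : 0 < s) (hs1 : 2*s ≤ 1) {p : E2} (hp : ‖p‖ ≤ 1) (q : E2) :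
    ∫ w, kerA s p w * kerB s q w ∂kap = phi s s p q - phi (2*s) (2*s) p q := by
  have hs2 : 0 < 2*s := by positivity
  have e : ∀ w, kerA s p w * kerB s q w =
      (rho s p w * mar s (lin (q 0) w - q 1) - rho s p w * mar (2*s) (lin (q 0) w - q 1)) +
      (rho (2*s) p w * mar s (lin (q 0) w - q 1)
        - rho (2*s) p w * mar (2*s) (lin (q 0) w - q 1)) := by
    intro w
    have : kerA s p w * kerB s q w = kerA s p w * eta s (lin (q 0) w - q 1) := by
      by_cases h : kerA s p w = 0
      · simp [h]
      · obtain ⟨h0, h1, -⟩ := kerA_support hs h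
        rw [kerB, cut_eq_one (norm_le_of_near hp hs1 h0 h1), one_mul]
    rw [this, kerA, eta]; ring
  have i1 := integrable_rho_mar (s := s) hs p q
  have i2 := integrable_rho_mar (s := s) hs2 p q
  have i3 := integrable_rho_mar (s := 2*s) hs p q
  have i4 := integrable_rho_mar (s := 2*s) hs2 p q
  simp_rw [e]
  refine (integral_add (i1.sub i2) (i3.sub i4)).trans ?_
  rw [integral_sub' i1 i2, integral_sub' i3 i4]
  change phi s s p q - phi s (2*s) p q + (phi (2*s) s p q - phi (2*s) (2*s) p q) = _
  rw [phi_symm hs (by linarith) hs2 hs1 hp]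
  ring

lemma phi_nonneg (s s' p q) : 0 ≤ phi s s' p q :=
  integral_nonneg fun _ => mul_nonneg (rho_nonneg _ _ _) (mar_nonneg _ _)

lemma le_phi {s : ℝ} (hs : 0 < s) (hs1 : s ≤ 1) {p q : E2} (hp : ‖p‖ ≤ 1)
    (h : |proj (q 0) p - q 1| ≤ s/4) : 1/s ≤ phi s s p q := by
  rw [phi_eq hs hs1 hp]
  set x := proj (q 0) p
  set r := q 1
  have hm : MeasurableSet (Set.Icc (r - s/2) (r + s/2)) := measurableSet_Icc
  have e : 1/s = ∫ u, Set.indicator (Set.Icc (r - s/2) (r + s/2)) (fun _ => 1/s * (1/s)) u := by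
    rw [integral_indicator_const _ hm, Measure.real, Real.volume_Icc,
      ENNReal.toReal_ofReal (by linarith), smul_eq_mul]
    field_simp; ring
  rw [e]
  refine integral_mono ?_ ?_ fun u => ?_
  · rw [integrable_indicator_iff hm]
    exact integrableOn_const (by simp)
  · refine integrable_of_support (s := |r| + s) (by fun_prop) fun u hu => ?_
    rw [mar_eq_zero (u := u - r) hs, mul_zero]
    have := abs_sub_abs_le_abs_sub u r
    linarith
  · by_cases hu : u ∈ Set.Icc (r - s/2) (r + s/2)
    · rw [Set.indicator_of_mem hu]
      have h2 : |u - r| ≤ s/2 := by rw [abs_le]; constructor <;> linarith [hu.1, hu.2]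
      have h3 : |x - u| ≤ 3/4*s := by
        rw [abs_le] at *; constructor <;> linarith
      exact mul_le_mul (le_mar hs h3) (le_mar hs (by linarith)) (by positivity) (mar_nonneg _ _)
    · rw [Set.indicator_of_notMem hu]
      exact mul_nonneg (mar_nonneg _ _) (mar_nonneg _ _)

lemma phi_one_le (p q : E2) : phi 1 1 p q ≤ 2 * kap.real Set.univ := by
  refine (le_abs_self _).trans ?_
  rw [← Real.norm_eq_abs]
  refine norm_integral_le_of_norm_le_const (C := 2) (Filter.Eventually.of_forall fun w => ?_)
  rw [Real.norm_of_nonneg (mul_nonneg (rho_nonneg _ _ _) (mar_nonneg _ _))]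
  have h1 := rho_le 1 p w
  have h2 := mar_le one_pos (lin (q 0) w - q 1)
  calc _ ≤ (1/1^2:ℝ) * (2/1) := mul_le_mul h1 h2 (mar_nonneg _ _) (by norm_num)
    _ = 2 := by norm_num

/-! ### Kernel estimates -/

lemma integral_kerA_kerA_le {s : ℝ} (hs : 0 < s) (p p' : E2) :
    ∫ w, kerA s p w * kerA s p' w ∂kap ≤ if dist p p' / 4 ≤ s then 64 / s^2 else 0 := by
  split_ifs with h
  · set S : Set (ℝ × ℝ) := closedBall (p 0) (2*s) ×ˢ closedBall (p 1) (2*s) with hS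
    have hSm : MeasurableSet S := measurableSet_closedBall.prod measurableSet_closedBall
    have hvol : (volume : Measure (ℝ×ℝ)) S = ENNReal.ofReal (16*s^2) := by
      rw [hS, Measure.volume_eq_prod, Measure.prod_prod, Real.volume_closedBall,
        Real.volume_closedBall, ← ENNReal.ofReal_mul (by positivity)]
      congr 1; ring
    calc _ ≤ ∫ w, S.indicator (fun _ => 2/s^2 * (2/s^2)) w ∂kap := by
          refine integral_mono_of_nonneg
            (Filter.Eventually.of_forall fun w => mul_nonneg (kerA_nonneg _ _ _) (kerA_nonneg _ _ _))
            ?_ (Filter.Eventually.of_forall fun w => ?_)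
          · rw [integrable_indicator_iff hSm]
            exact integrableOn_const (measure_ne_top _ _)
          · by_cases hw : w ∈ S
            · rw [Set.indicator_of_mem hw]
              exact mul_le_mul (kerA_le hs _ _) (kerA_le hs _ _) (kerA_nonneg _ _ _) (by positivity)
            · rw [Set.indicator_of_notMem hw]
              have : kerA s p w = 0 := by
                by_contra h0
                obtain ⟨h1, h2, -⟩ := kerA_support hs h0
                apply hw
                refine ⟨?_, ?_⟩ <;> rw [mem_closedBall, dist_comm, Real.dist_eq] <;> assumption
              simp [this]
      _ = kap.real S * (2/s^2 * (2/s^2)) := by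
          rw [integral_indicator_const _ hSm, smul_eq_mul]
      _ ≤ 16*s^2 * (2/s^2 * (2/s^2)) := by
          gcongr
          refine ENNReal.toReal_le_of_le_ofReal (by positivity) ?_
          rw [← hvol]
          exact Measure.restrict_apply_le _ _
      _ = 64 / s^2 := by field_simp; norm_num
  · refine le_of_eq ?_
    have : ∀ w, kerA s p w * kerA s p' w = 0 := by
      intro w
      by_contra h0
      have h1 := (kerA_support hs (left_ne_zero_of_mul h0)).2.2
      have h2 := (kerA_support hs (right_ne_zero_of_mul h0)).2.2
      set w' : E2 := !₂[w.1, w.2]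
      have d1 : dist p w' ≤ 2*s := by
        rw [EuclideanSpace.dist_eq, Fin.sum_univ_two]
        refine Real.sqrt_le_iff.2 ⟨by positivity, ?_⟩
        simpa [w', Real.dist_eq, sq_abs] using h1
      have d2 : dist p' w' ≤ 2*s := by
        rw [EuclideanSpace.dist_eq, Fin.sum_univ_two]
        refine Real.sqrt_le_iff.2 ⟨by positivity, ?_⟩
        simpa [w', Real.dist_eq, sq_abs] using h2
      have := dist_triangle_right p p' w'
      apply h
      linarith
    simp [this]

lemma abs_lin_le (θ : ℝ) (w : ℝ × ℝ) : |lin θ w| ≤ 2 * ‖w‖ := by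
  have h1 : |w.1| ≤ ‖w‖ := le_max_left _ _
  have h2 : |w.2| ≤ ‖w‖ := le_max_right _ _
  have c1 := Real.abs_cos_le_one (2*π*θ)
  have c2 := Real.abs_sin_le_one (2*π*θ)
  have k1 : |w.1 * Real.cos (2*π*θ)| ≤ ‖w‖ * 1 := by rw [abs_mul]; gcongr
  have k2 : |w.2 * Real.sin (2*π*θ)| ≤ ‖w‖ * 1 := by rw [abs_mul]; gcongr
  have := abs_add_le (w.1 * Real.cos (2*π*θ)) (w.2 * Real.sin (2*π*θ))
  unfold lin
  linarith

lemma abs_lin_sub_le (θ θ' : ℝ) (w : ℝ × ℝ) :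
    |lin θ w - lin θ' w| ≤ 2 * ‖w‖ * (2*π*|θ - θ'|) := by
  have h1 : |w.1| ≤ ‖w‖ := le_max_left _ _
  have h2 : |w.2| ≤ ‖w‖ := le_max_right _ _
  have e : |2*π*θ - 2*π*θ'| = 2*π*|θ - θ'| := by
    rw [← mul_sub, abs_mul, abs_of_pos (by positivity)]
  have c1 : |Real.cos (2*π*θ) - Real.cos (2*π*θ')| ≤ 2*π*|θ - θ'| := by
    rw [← e]; exact Real.abs_cos_sub_cos_le _ _
  have c2 : |Real.sin (2*π*θ) - Real.sin (2*π*θ')| ≤ 2*π*|θ - θ'| := by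
    rw [← e]; exact Real.abs_sin_sub_sin_le _ _
  have k1 : |w.1 * (Real.cos (2*π*θ) - Real.cos (2*π*θ'))| ≤ ‖w‖ * (2*π*|θ - θ'|) := by
    rw [abs_mul]; gcongr
  have k2 : |w.2 * (Real.sin (2*π*θ) - Real.sin (2*π*θ'))| ≤ ‖w‖ * (2*π*|θ - θ'|) := by
    rw [abs_mul]; gcongr
  have := abs_add_le (w.1 * (Real.cos (2*π*θ) - Real.cos (2*π*θ')))
    (w.2 * (Real.sin (2*π*θ) - Real.sin (2*π*θ')))
  rw [show lin θ w - lin θ' w = w.1 * (Real.cos (2*π*θ) - Real.cos (2*π*θ'))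
    + w.2 * (Real.sin (2*π*θ) - Real.sin (2*π*θ')) by unfold lin; ring]
  linarith

lemma integral_kerB_kerB (s : ℝ) (q q' : E2) :
    ∫ w, kerB s q w * kerB s q' w ∂kap = ∫ w, kerB s q w * kerB s q' w := by
  refine setIntegral_eq_integral_of_forall_compl_eq_zero fun w hw => ?_
  rw [mem_closedBall_zero_iff, not_le] at hw
  simp [kerB, cut_eq_zero hw.le]

lemma kerB_support {s : ℝ} (hs : 0 < s) {q w} (h : kerB s q w ≠ 0) :
    ‖w‖ ≤ 3 ∧ |lin (q 0) w - q 1| ≤ 2*s := by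
  constructor
  · by_contra hc
    exact h (by rw [kerB, cut_eq_zero (by linarith), zero_mul])
  · by_contra hc
    exact h (by rw [kerB, eta_eq_zero hs (by linarith), mul_zero])

/-- The trivial bound: the strip around the line `q` meets the bounded region in area `≲ s`. -/
lemma abs_integral_kerB_le {s : ℝ} (hs : 0 < s) (q q' : E2) :
    |∫ w, kerB s q w * kerB s q' w ∂kap| ≤ 192 / s := by
  rw [integral_kerB_kerB]
  set R : Set (ℝ × ℝ) := closedBall (q 1) (2*s) ×ˢ closedBall 0 6 with hR
  have hRm : MeasurableSet R := measurableSet_closedBall.prod measurableSet_closedBall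
  have hvol : (volume : Measure (ℝ×ℝ)) R = ENNReal.ofReal (48*s) := by
    rw [hR, Measure.volume_eq_prod, Measure.prod_prod, Real.volume_closedBall,
      Real.volume_closedBall, ← ENNReal.ofReal_mul (by positivity)]
    congr 1; ring
  set H : ℝ × ℝ → ℝ := R.indicator fun _ => 2/s * (2/s) with hH
  have hHm : Measurable H := measurable_const.indicator hRm
  set T : ℝ × ℝ → ℝ × ℝ := fun w => (lin (q 0) w, lin (q 0 + 1/4) w) with hT
  have hTm : Measurable T := by fun_prop
  have hmap : Measure.map T volume = volume := by
    rw [hT, map_lin (by rw [sin_quarter]; norm_num), sin_quarter]; simp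
  have hi : Integrable (fun w => H (T w)) := by
    have : Integrable H (Measure.map T volume) := by
      rw [hmap, integrable_indicator_iff hRm]
      exact integrableOn_const (by rw [hvol]; exact ENNReal.ofReal_ne_top)
    exact this.comp_measurable hTm
  calc |∫ w, kerB s q w * kerB s q' w| ≤ ∫ w, H (T w) := by
        rw [← Real.norm_eq_abs]
        refine norm_integral_le_of_norm_le hi (Filter.Eventually.of_forall fun w => ?_)
        by_cases h0 : kerB s q w = 0
        · rw [h0, zero_mul, norm_zero]
          exact Set.indicator_nonneg (fun _ _ => by positivity) _
        · obtain ⟨h1, h2⟩ := kerB_support hs h0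
          have hw : T w ∈ R := by
            refine ⟨?_, ?_⟩
            · rw [mem_closedBall, Real.dist_eq]; exact h2
            · rw [mem_closedBall_zero_iff, Real.norm_eq_abs]
              exact (abs_lin_le _ _).trans (by linarith)
          rw [hH, Set.indicator_of_mem hw, norm_mul]
          exact mul_le_mul (abs_kerB_le hs _ _) (abs_kerB_le hs _ _) (norm_nonneg _) (by positivity)
    _ = ∫ z, H z := by
        conv_rhs => rw [← hmap]
        rw [integral_map hTm.aemeasurable hHm.aestronglyMeasurable]
    _ = 192 / s := by
        rw [hH, integral_indicator_const _ hRm, Measure.real, hvol,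
          ENNReal.toReal_ofReal (by positivity), smul_eq_mul]
        field_simp; norm_num

/-- Two transversal waves: the first has mean zero, and the cutoff only varies at scale
`|sin|` in the direction of the second line. -/
lemma abs_integral_kerB_le_of_transversal {s : ℝ} (hs : 0 < s) (q q' : E2)
    (hσ : Real.sin (2*π*(q' 0 - q 0)) ≠ 0) :
    |∫ w, kerB s q w * kerB s q' w ∂kap| ≤ 256 * s / (Real.sin (2*π*(q' 0 - q 0)))^2 := by
  rw [integral_kerB_kerB]
  set σ := Real.sin (2*π*(q' 0 - q 0)) with hσd
  set r := q 1
  set r' := q' 1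
  set a := 2*π*(q 0) with ha
  set b := 2*π*(q' 0) with hb
  have hσ' : σ = Real.sin b * Real.cos a - Real.cos b * Real.sin a := by
    rw [hσd, mul_sub, Real.sin_sub]
  have hσp : 0 < |σ| := abs_pos.2 hσ
  -- the inverse of `w ↦ (w · e, w · e')`
  set L : ℝ × ℝ → ℝ × ℝ := fun z =>
    ((z.1 * Real.sin b - z.2 * Real.sin a) / σ, (-z.1 * Real.cos b + z.2 * Real.cos a) / σ) with hL
  have hLc : Continuous L := by fun_prop
  have hLinv : ∀ w, L (lin (q 0) w, lin (q' 0) w) = w := by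
    intro w
    ext
    · simp only [hL, lin, ← ha, ← hb]
      rw [div_eq_iff hσ, hσ']; ring
    · simp only [hL, lin, ← ha, ← hb]
      rw [div_eq_iff hσ, hσ']; ring
  set H : ℝ × ℝ → ℝ := fun z => cut (L z)^2 * (eta s (z.1 - r) * eta s (z.2 - r')) with hH
  -- `H` with its cutoff frozen in the first variable, so that the mean zero factor splits off
  set H0 : ℝ × ℝ → ℝ := fun z => cut (L (r, z.2))^2 * (eta s (z.1 - r) * eta s (z.2 - r')) with hH0
  have hHc : Continuous H := by fun_prop
  have hH0c : Continuous H0 := by fun_prop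
  set R : Set (ℝ × ℝ) := closedBall r (2*s) ×ˢ closedBall r' (2*s) with hR
  have hRm : MeasurableSet R := measurableSet_closedBall.prod measurableSet_closedBall
  have hRc : IsCompact R := (isCompact_closedBall _ _).prod (isCompact_closedBall _ _)
  have hvol : (volume : Measure (ℝ×ℝ)) R = ENNReal.ofReal (16*s^2) := by
    rw [hR, Measure.volume_eq_prod, Measure.prod_prod, Real.volume_closedBall,
      Real.volume_closedBall, ← ENNReal.ofReal_mul (by positivity)]
    congr 1; ring
  have hz : ∀ z ∉ R, eta s (z.1 - r) * eta s (z.2 - r') = 0 := by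
    intro z hzR
    by_contra h0
    apply hzR
    refine ⟨?_, ?_⟩ <;> rw [mem_closedBall, Real.dist_eq]
    · by_contra hc
      exact left_ne_zero_of_mul h0 (eta_eq_zero hs (by linarith))
    · by_contra hc
      exact right_ne_zero_of_mul h0 (eta_eq_zero hs (by linarith))
  have hiH : Integrable H := hHc.integrable_of_hasCompactSupport
    (HasCompactSupport.intro hRc fun z h => by simp only [hH, hz z h, mul_zero])
  have hiH0 : Integrable H0 := hH0c.integrable_of_hasCompactSupport
    (HasCompactSupport.intro hRc fun z h => by simp only [hH0, hz z h, mul_zero])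
  have h0 : ∫ z, H0 z = 0 := by
    have e : ∀ z, H0 z = eta s (z.1 - r) * (cut (L (r, z.2))^2 * eta s (z.2 - r')) := by
      intro z; simp only [hH0]; ring
    simp_rw [e]
    rw [Measure.volume_eq_prod, integral_prod_mul (fun u => eta s (u - r))
      (fun v => cut (L (r, v))^2 * eta s (v - r')), integral_sub_right_eq_self (eta s),
      integral_eta hs, zero_mul]
  have e1 : ∫ w, kerB s q w * kerB s q' w = |σ⁻¹| * ∫ z, H z := by
    rw [← integral_lin hσ hHc.measurable]
    refine integral_congr_ae (Filter.Eventually.of_forall fun w => ?_)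
    simp only [hH, hLinv, kerB]
    ring
  have e2 : ∫ z, H z = ∫ z, (H z - H0 z) := by rw [integral_sub hiH hiH0, h0, sub_zero]
  have hdiff : ∀ z ∈ R, ‖H z - H0 z‖ ≤ 2 * (2*s/|σ|) * (2/s * (2/s)) := by
    intro z hzR
    have hz1 : |z.1 - r| ≤ 2*s := by simpa [Real.dist_eq] using hzR.1
    have e : H z - H0 z = (cut (L z)^2 - cut (L (r, z.2))^2) *
        (eta s (z.1 - r) * eta s (z.2 - r')) := by simp only [hH, hH0]; ring
    have hLd : ‖L z - L (r, z.2)‖ ≤ 2*s/|σ| := by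
      have d1 : (L z - L (r, z.2)).1 = (z.1 - r) * Real.sin b / σ := by
        simp only [hL, Prod.fst_sub]; ring
      have d2 : (L z - L (r, z.2)).2 = -((z.1 - r) * Real.cos b) / σ := by
        simp only [hL, Prod.snd_sub]; ring
      refine max_le ?_ ?_
      · rw [d1, Real.norm_eq_abs, abs_div, abs_mul]
        refine div_le_div_of_nonneg_right ?_ hσp.le
        exact (mul_le_mul hz1 (Real.abs_sin_le_one b) (abs_nonneg _) (by positivity)).trans_eq
          (mul_one _)
      · rw [d2, Real.norm_eq_abs, abs_div, abs_neg, abs_mul]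
        refine div_le_div_of_nonneg_right ?_ hσp.le
        exact (mul_le_mul hz1 (Real.abs_cos_le_one b) (abs_nonneg _) (by positivity)).trans_eq
          (mul_one _)
    rw [e, norm_mul, norm_mul]
    refine mul_le_mul ((abs_cut_sq_sub_le _ _).trans (by gcongr)) ?_ (by positivity) (by positivity)
    exact mul_le_mul (abs_eta_le hs _) (abs_eta_le hs _) (norm_nonneg _) (by positivity)
  have h3 : |∫ z, (H z - H0 z)| ≤ 256*s/|σ| := by
    rw [← setIntegral_eq_integral_of_forall_compl_eq_zero (s := R)
      (fun z h => by simp only [hH, hH0, hz z h, mul_zero, sub_zero]), ← Real.norm_eq_abs]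
    refine (norm_setIntegral_le_of_norm_le_const (by rw [hvol]; exact ENNReal.ofReal_lt_top)
      hdiff).trans (le_of_eq ?_)
    rw [Measure.real, hvol, ENNReal.toReal_ofReal (by positivity)]
    field_simp; norm_num
  rw [e1, e2, abs_mul, abs_abs, abs_inv]
  calc |σ|⁻¹ * |∫ z, (H z - H0 z)| ≤ |σ|⁻¹ * (256*s/|σ|) := by gcongr
    _ = 256*s/σ^2 := by rw [← sq_abs σ]; field_simp

/-- Waves attached to lines with parameters at distance `D ≫ s` are almost orthogonal: either the
two strips do not meet in the bounded region, or the lines make an angle comparable to `D`. -/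
lemma abs_integral_kerB_le_dist {s : ℝ} (hs : 0 < s) {q q' : E2} (hqq : |q 0 - q' 0| ≤ 1/4)
    (hD : 0 < dist q q') :
    |∫ w, kerB s q w * kerB s q' w ∂kap| ≤ 102400 * s / (dist q q')^2 := by
  set D := dist q q' with hDd
  rcases le_or_gt D (8*s) with h | h
  · refine (abs_integral_kerB_le hs q q').trans ?_
    rw [div_le_div_iff₀ hs (by positivity)]
    nlinarith
  by_cases hG : ∀ w, kerB s q w * kerB s q' w = 0
  · simp only [hG, integral_zero, abs_zero]
    positivity
  push Not at hG
  obtain ⟨w, hw⟩ := hG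
  obtain ⟨h1, h2⟩ := kerB_support hs (left_ne_zero_of_mul hw)
  obtain ⟨-, h3⟩ := kerB_support hs (right_ne_zero_of_mul hw)
  set x := |q 0 - q' 0| with hx
  have hDle : D ≤ x + |q 1 - q' 1| := by
    rw [hDd, EuclideanSpace.dist_eq, Fin.sum_univ_two, Real.dist_eq, Real.dist_eq]
    refine Real.sqrt_le_iff.2 ⟨by positivity, ?_⟩
    nlinarith [abs_nonneg (q 0 - q' 0), abs_nonneg (q 1 - q' 1)]
  have h4 : |lin (q 0) w - lin (q' 0) w| ≤ 38 * x := by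
    refine (abs_lin_sub_le _ _ _).trans ?_
    calc 2 * ‖w‖ * (2*π*x) ≤ 2 * 3 * (2*3.15*x) := by
          gcongr
          exact Real.pi_lt_d2.le
      _ ≤ 38 * x := by linarith [abs_nonneg (q 0 - q' 0)]
  have h5 : |q 1 - q' 1| ≤ 4*s + 38*x := by
    rw [abs_le] at *
    constructor <;> linarith
  have h6 : D/78 ≤ x := by linarith
  have h7 : D/20 ≤ |Real.sin (2*π*(q' 0 - q 0))| := by
    have e : |2*π*(q' 0 - q 0)| = 2*π*x := by
      rw [abs_mul, abs_of_pos (by positivity), abs_sub_comm]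
    have hp := Real.pi_pos
    have hle : 2*π*x ≤ π/2 := by nlinarith
    have e2 : |Real.sin (2*π*(q' 0 - q 0))| = Real.sin (2*π*x) := by
      rw [← e, Real.abs_sin_eq_sin_abs_of_abs_le_pi (by rw [e]; linarith)]
    have := Real.mul_le_sin (x := 2*π*x) (by positivity) hle
    rw [e2]
    have e3 : 2/π*(2*π*x) = 4*x := by field_simp; ring
    linarith
  have hσ : Real.sin (2*π*(q' 0 - q 0)) ≠ 0 := abs_pos.1 (by linarith)
  refine (abs_integral_kerB_le_of_transversal hs q q' hσ).trans ?_
  rw [← sq_abs (Real.sin _)]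
  calc 256*s/|Real.sin (2*π*(q' 0 - q 0))|^2 ≤ 256*s/(D/20)^2 := by gcongr
    _ = 102400*s/D^2 := by field_simp; norm_num

/-! ### Energies -/

/-- The correlation of `kerA` at scale `s` is `≲ s⁻²` for `s ≳ |p - p'|` and vanishes below, so the
sum is governed by the scale `s ∼ |p - p'|`. -/
lemma sum_kerA_le {t : ℝ} (ht : t < 3) : ∃ C : ℝ, 0 < C ∧ ∀ (n : ℕ) (p p' : E2),
    dist p p' ≠ 0 →
    |∑ j ∈ Finset.range n, (((1:ℝ)/2)^(j+1))^(t-1) *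
      ∫ w, kerA ((1/2)^(j+1)) p w * kerA ((1/2)^(j+1)) p' w ∂kap| ≤ C * dist p p' ^ (-(3-t)) := by
  obtain ⟨C, hC, h⟩ := sum_large (b := 3-t) (by linarith)
  refine ⟨64 * (C * (1/4:ℝ)^(-(3-t))), by positivity, fun n p p' hd => ?_⟩
  have hd0 : 0 < dist p p' := lt_of_le_of_ne dist_nonneg (Ne.symm hd)
  rw [abs_of_nonneg (Finset.sum_nonneg fun j _ => mul_nonneg (by positivity)
    (integral_nonneg fun w => mul_nonneg (kerA_nonneg _ _ _) (kerA_nonneg _ _ _)))]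
  calc _ ≤ ∑ j ∈ Finset.range n, 64 * (if dist p p' / 4 ≤ ((1:ℝ)/2)^(j+1)
          then (((1:ℝ)/2)^(j+1))^(-(3-t)) else 0) := by
        refine Finset.sum_le_sum fun j _ => ?_
        have hs : 0 < ((1:ℝ)/2)^(j+1) := by positivity
        set s := ((1:ℝ)/2)^(j+1)
        refine (mul_le_mul_of_nonneg_left (integral_kerA_kerA_le hs p p') (by positivity)).trans ?_
        split_ifs
        · have : s^(-(3-t)) = s^(t-1) / s^2 := by
            rw [← Real.rpow_natCast s 2, ← Real.rpow_sub hs]; congr 1; push_cast; ring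
          rw [this]
          exact le_of_eq (by ring)
        · simp
    _ ≤ 64 * (C * (dist p p' / 4)^(-(3-t))) := by
        rw [← Finset.mul_sum]
        gcongr
        exact h _ (by positivity) n
    _ = _ := by
        rw [div_eq_mul_one_div, Real.mul_rpow hd0.le (by norm_num)]; ring

/-- The correlation of `kerB` at scale `s` is `≲ 1/s` for `s ≥ D` and `≲ s/D²` for `s < D`, where
`D = |q - q'|`. With the weight `s^(1-t)` both ranges are governed by `s ∼ D`, the second because
`t < 2`. -/
lemma sum_kerB_le {t : ℝ} (ht : 1 < t) (ht2 : t < 2) : ∃ C : ℝ, 0 < C ∧ ∀ (n : ℕ) (q q' : E2),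
    |q 0 - q' 0| ≤ 1/4 → dist q q' ≠ 0 →
    |∑ j ∈ Finset.range n, (((1:ℝ)/2)^(j+1))^(1-t) *
      ∫ w, kerB ((1/2)^(j+1)) q w * kerB ((1/2)^(j+1)) q' w ∂kap| ≤ C * dist q q' ^ (-t) := by
  obtain ⟨C, hC, h⟩ := sum_large (b := t) (by linarith)
  obtain ⟨C', hC', h'⟩ := sum_small (b := 2-t) (by linarith)
  refine ⟨102400 * (C + C'), by positivity, fun n q q' hqq hd => ?_⟩
  have hd0 : 0 < dist q q' := lt_of_le_of_ne dist_nonneg (Ne.symm hd)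
  set D := dist q q'
  calc _ ≤ ∑ j ∈ Finset.range n, 102400 * ((if D ≤ ((1:ℝ)/2)^(j+1)
          then (((1:ℝ)/2)^(j+1))^(-t) else 0) +
          (if ((1:ℝ)/2)^(j+1) < D then (((1:ℝ)/2)^(j+1))^(2-t) else 0) / D^2) := by
        refine (Finset.abs_sum_le_sum_abs _ _).trans (Finset.sum_le_sum fun j _ => ?_)
        have hs : 0 < ((1:ℝ)/2)^(j+1) := by positivity
        set s := ((1:ℝ)/2)^(j+1)
        rw [abs_mul, abs_of_nonneg (by positivity : 0 ≤ s^(1-t))]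
        rcases le_or_gt D s with hDs | hDs
        · rw [if_pos hDs, if_neg (not_lt.2 hDs), zero_div, add_zero]
          have e : s^(-t) = s^(1-t) / s := by
            rw [← Real.rpow_sub_one hs.ne']; congr 1; ring
          calc _ ≤ s^(1-t) * (192/s) := by gcongr; exact abs_integral_kerB_le hs q q'
            _ ≤ s^(1-t) * (102400/s) := by gcongr; norm_num
            _ = _ := by rw [e]; ring
        · rw [if_pos hDs, if_neg (not_le.2 hDs), zero_add]
          have e : s^(2-t) = s^(1-t) * s := by
            rw [← Real.rpow_add_one hs.ne']; congr 1; ring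
          calc _ ≤ s^(1-t) * (102400*s/D^2) := by
                gcongr; exact abs_integral_kerB_le_dist hs hqq hd0
            _ = _ := by rw [e]; ring
    _ ≤ 102400 * (C * D^(-t) + C' * D^(2-t) / D^2) := by
        rw [← Finset.mul_sum, Finset.sum_add_distrib, ← Finset.sum_div]
        gcongr
        · exact h D hd0 n
        · exact h' n D hd0
    _ = _ := by
        have : D^(-t) = D^(2-t) / D^2 := by
          rw [← Real.rpow_natCast D 2, ← Real.rpow_sub hd0]; congr 1; push_cast; ring
        rw [this]; ring

lemma measurable_riesz_kernel (e : ℝ) : Measurable fun x : E2 × E2 => edist x.1 x.2 ^ (-e) := by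
  fun_prop

lemma riesz_eq_prod (e : ℝ) (μ : Measure E2) [IsFiniteMeasure μ] :
    riesz e μ = ∫⁻ x, edist x.1 x.2 ^ (-e) ∂(μ.prod μ) := by
  rw [lintegral_prod _ (measurable_riesz_kernel e).aemeasurable]; rfl

/-- `TT*`: a weighted sum of squares of averages is controlled by a Riesz energy as soon as the
weighted sum of the correlations of the kernels is controlled by the Riesz kernel. -/
lemma energy_le (μ : Measure E2) [IsFiniteMeasure μ] (n : ℕ) (ω : ℕ → ℝ)
    (K : ℕ → E2 → ℝ × ℝ → ℝ) (hK : ∀ j, Measurable (Function.uncurry (K j))) (b : ℕ → ℝ)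
    (hb : ∀ j p w, |K j p w| ≤ b j) {C e : ℝ} (hC : 0 < C) (he : 0 < e)
    (h : ∀ᵐ x ∂(μ.prod μ), dist x.1 x.2 ≠ 0 →
      |∑ j ∈ Finset.range n, ω j * ∫ w, K j x.1 w * K j x.2 w ∂kap| ≤ C * dist x.1 x.2 ^ (-e)) :
    ENNReal.ofReal (∑ j ∈ Finset.range n, ω j * ∫ w, (∫ p, K j p w ∂μ)^2 ∂kap)
      ≤ ENNReal.ofReal C * riesz e μ := by
  have hf := fun j => fub μ μ kap (hK j) (hK j) (hb j) (hb j)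
  have e1 : ∑ j ∈ Finset.range n, ω j * ∫ w, (∫ p, K j p w ∂μ)^2 ∂kap =
      ∫ x, ∑ j ∈ Finset.range n, ω j * ∫ w, K j x.1 w * K j x.2 w ∂kap ∂(μ.prod μ) := by
    rw [integral_finsetSum _ fun j _ => (hf j).1.const_mul _]
    refine Finset.sum_congr rfl fun j _ => ?_
    rw [integral_const_mul, (hf j).2.2]
    simp only [sq]
  rw [e1, riesz_eq_prod, ← lintegral_const_mul _ (measurable_riesz_kernel e)]
  refine (Real.ofReal_le_enorm _).trans ((enorm_integral_le_lintegral_enorm _).trans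
    (lintegral_mono_ae ?_))
  filter_upwards [h] with x hx
  by_cases hd : dist x.1 x.2 = 0
  -- on the diagonal the Riesz kernel is infinite
  · rw [dist_eq_zero] at hd
    rw [hd, edist_self, ENNReal.zero_rpow_of_neg (by linarith),
      ENNReal.mul_top (by simpa using hC)]
    exact le_top
  · have hd0 : 0 < dist x.1 x.2 := lt_of_le_of_ne dist_nonneg (Ne.symm hd)
    rw [Real.enorm_eq_ofReal_abs, edist_dist, ENNReal.ofReal_rpow_of_pos hd0,
      ← ENNReal.ofReal_mul hC.le]
    exact ENNReal.ofReal_le_ofReal (hx hd)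

/-- On a bounded set the Riesz kernel is bounded below; here `3^(-e) ≥ 1/9`. -/
lemma mass_sq_le (μ : Measure E2) [IsFiniteMeasure μ] {e : ℝ} (he : 0 < e) (he2 : e ≤ 2)
    (h : ∀ᵐ x ∂(μ.prod μ), dist x.1 x.2 ≤ 3) :
    ENNReal.ofReal ((μ.real Set.univ)^2) ≤ 9 * riesz e μ := by
  have e1 : ENNReal.ofReal ((μ.real Set.univ)^2) = ∫⁻ _, 1 ∂(μ.prod μ) := by
    rw [lintegral_one, ← Set.univ_prod_univ, Measure.prod_prod, sq,
      ENNReal.ofReal_mul measureReal_nonneg, ofReal_measureReal]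
  rw [e1, riesz_eq_prod, ← lintegral_const_mul _ (measurable_riesz_kernel e)]
  refine lintegral_mono_ae ?_
  filter_upwards [h] with x hx
  by_cases hd : dist x.1 x.2 = 0
  · rw [dist_eq_zero] at hd
    rw [hd, edist_self, ENNReal.zero_rpow_of_neg (by linarith), ENNReal.mul_top (by norm_num)]
    exact le_top
  · have hd0 : 0 < dist x.1 x.2 := lt_of_le_of_ne dist_nonneg (Ne.symm hd)
    rw [edist_dist, ENNReal.ofReal_rpow_of_pos hd0, show (9:ℝ≥0∞) = ENNReal.ofReal 9 by simp,
      ← ENNReal.ofReal_mul (by norm_num), ← ENNReal.ofReal_one]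
    refine ENNReal.ofReal_le_ofReal ?_
    have h1 : (3:ℝ)^(-e) ≤ dist x.1 x.2 ^ (-e) :=
      Real.rpow_le_rpow_of_nonpos hd0 hx (by linarith)
    have h2 : (3:ℝ)^(-(2:ℝ)) ≤ 3^(-e) :=
      Real.rpow_le_rpow_of_exponent_le (by norm_num) (by linarith)
    have h3 : (3:ℝ)^(-(2:ℝ)) = 1/9 := by
      rw [Real.rpow_neg (by norm_num)]; norm_num
    rw [h3] at h2
    have h4 := h2.trans h1
    linarith

/-! ### From incidences to kernels -/

lemma abs_proj_sub_le {q z : E2} {δ : ℝ} (h : z ∈ tube q δ) : |proj (q 0) z - q 1| ≤ δ := by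
  refine le_trans ?_ (show infDist z (line (q 0) (q 1)) ≤ δ from h)
  have hne : (line (q 0) (q 1)).Nonempty := by
    refine ⟨!₂[q 1 * Real.cos (2*π*q 0), q 1 * Real.sin (2*π*q 0)], ?_⟩
    change proj _ _ = _
    simp only [proj, Matrix.cons_val_zero, Matrix.cons_val_one]
    linear_combination q 1 * Real.sin_sq_add_cos_sq (2*π*q 0)
  rw [le_infDist hne]
  intro w hw
  have hw' : proj (q 0) w = q 1 := hw
  rw [← hw', EuclideanSpace.dist_eq, Fin.sum_univ_two, Real.dist_eq, Real.dist_eq, sq_abs, sq_abs]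
  refine Real.abs_le_sqrt ?_
  have := Real.sin_sq_add_cos_sq (2*π*q 0)
  unfold proj
  set c := Real.cos (2*π*q 0)
  set d := Real.sin (2*π*q 0)
  have e : (z 0 - w 0)^2 + (z 1 - w 1)^2 - (z 0 * c + z 1 * d - (w 0 * c + w 1 * d))^2
      = ((z 0 - w 0) * d - (z 1 - w 1) * c)^2 := by
    linear_combination (-(z 0 - w 0)^2 - (z 1 - w 1)^2) * this
  nlinarith [sq_nonneg ((z 0 - w 0) * d - (z 1 - w 1) * c)]

lemma integrable_phi (μ ν : Measure E2) [IsFiniteMeasure μ] [IsFiniteMeasure ν] {s : ℝ}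
    (hs : 0 < s) : Integrable (fun x : E2 × E2 => phi s s x.1 x.2) (μ.prod ν) := by
  refine (fub μ ν kap (A := rho s) (B := fun q w => mar s (lin (q 0) w - q 1)) (a := 1/s^2)
    (b := 2/s) (measurable_rho s) (measurable_wave (continuous_mar s)) (fun p w => ?_)
    (fun q w => ?_)).1
  · rw [abs_of_nonneg (rho_nonneg _ _ _)]; exact rho_le _ _ _
  · rw [abs_of_nonneg (mar_nonneg _ _)]; exact mar_le hs _

/-- Chebyshev's inequality for `phi s s`, which is at least `1/s` on incident pairs. -/
lemma incid_le (μ ν : Measure E2) [IsFiniteMeasure μ] [IsFiniteMeasure ν]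
    (hμ : ∀ᵐ p ∂μ, ‖p‖ ≤ 1) {s δ : ℝ} (hs : 0 < s) (hs1 : s ≤ 1) (hδ : δ ≤ s/4) :
    incid δ μ ν ≤ ENNReal.ofReal (s * ∫ x, phi s s x.1 x.2 ∂(μ.prod ν)) := by
  have hi := integrable_phi μ ν hs
  have h1 : incid δ μ ν ≤
      (μ.prod ν) {x | ENNReal.ofReal (1/s) ≤ ENNReal.ofReal (phi s s x.1 x.2)} := by
    refine measure_mono_ae ?_
    filter_upwards [Measure.quasiMeasurePreserving_fst.ae hμ] with x hx hxt
    exact ENNReal.ofReal_le_ofReal (le_phi hs hs1 hx ((abs_proj_sub_le hxt).trans hδ))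
  have h2 := mul_meas_ge_le_lintegral₀ hi.aestronglyMeasurable.aemeasurable.ennreal_ofReal
    (ENNReal.ofReal (1/s))
  rw [← ofReal_integral_eq_lintegral_ofReal hi
    (Filter.Eventually.of_forall fun x => phi_nonneg _ _ _ _)] at h2
  calc incid δ μ ν ≤ ENNReal.ofReal s * (ENNReal.ofReal (1/s) *
        (μ.prod ν) {x | ENNReal.ofReal (1/s) ≤ ENNReal.ofReal (phi s s x.1 x.2)}) := by
        rw [← mul_assoc, ← ENNReal.ofReal_mul hs.le, mul_one_div_cancel hs.ne', ENNReal.ofReal_one,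
          one_mul]
        exact h1
    _ ≤ _ := by
        rw [ENNReal.ofReal_mul hs.le]
        gcongr

/-- The telescoping decomposition, with the Cauchy–Schwarz inequality at each scale replaced by
the weighted arithmetic-geometric mean inequality with a free parameter `l`. -/
lemma integral_phi_le (t : ℝ) (μ ν : Measure E2) [IsFiniteMeasure μ] [IsFiniteMeasure ν]
    (hμ : ∀ᵐ p ∂μ, ‖p‖ ≤ 1) (n : ℕ) {l : ℝ} (hl : 0 < l) :
    ∫ x, phi ((1/2)^n) ((1/2)^n) x.1 x.2 ∂(μ.prod ν) ≤
      2 * kap.real Set.univ * (μ.real Set.univ * ν.real Set.univ) +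
      (l * ∑ j ∈ Finset.range n, (((1:ℝ)/2)^(j+1))^(t-1) *
          ∫ w, (∫ p, kerA ((1/2)^(j+1)) p w ∂μ)^2 ∂kap
       + l⁻¹ * ∑ j ∈ Finset.range n, (((1:ℝ)/2)^(j+1))^(1-t) *
          ∫ w, (∫ q, kerB ((1/2)^(j+1)) q w ∂ν)^2 ∂kap) / 2 := by
  induction n with
  | zero =>
    simp only [pow_zero, Finset.range_zero, Finset.sum_empty, mul_zero, add_zero, zero_div]
    calc _ ≤ ∫ _, 2 * kap.real Set.univ ∂(μ.prod ν) := by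
          refine integral_mono (integrable_phi μ ν one_pos) (integrable_const _) fun x => ?_
          exact phi_one_le _ _
      _ = _ := by
          rw [integral_const, smul_eq_mul, ← Set.univ_prod_univ, measureReal_prod_prod]
          ring
  | succ n ih =>
    rw [Finset.sum_range_succ, Finset.sum_range_succ]
    have hs : 0 < ((1:ℝ)/2)^(n+1) := by positivity
    have hs2 : ((1:ℝ)/2)^n = 2 * (1/2)^(n+1) := by rw [pow_succ]; ring
    have hs1 : 2 * ((1:ℝ)/2)^(n+1) ≤ 1 := by
      rw [← hs2]; exact pow_le_one₀ (by norm_num) (by norm_num)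
    rw [hs2] at ih
    set s := ((1:ℝ)/2)^(n+1)
    have hAb : ∀ p w, |kerA s p w| ≤ 2/s^2 := fun p w => by
      rw [abs_of_nonneg (kerA_nonneg _ _ _)]; exact kerA_le hs _ _
    have hAB := fub μ ν kap (measurable_kerA s) (measurable_kerB s) hAb (abs_kerB_le hs)
    have hAA := fub μ μ kap (measurable_kerA s) (measurable_kerA s) hAb hAb
    have hBB := fub ν ν kap (measurable_kerB s) (measurable_kerB s) (abs_kerB_le hs)
      (abs_kerB_le hs)
    have e : ∫ x, phi s s x.1 x.2 ∂(μ.prod ν) = ∫ x, phi (2*s) (2*s) x.1 x.2 ∂(μ.prod ν) +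
        ∫ w, (∫ p, kerA s p w ∂μ) * (∫ q, kerB s q w ∂ν) ∂kap := by
      rw [← hAB.2.2, ← integral_add (integrable_phi μ ν (by positivity)) hAB.1]
      refine integral_congr_ae ?_
      filter_upwards [Measure.quasiMeasurePreserving_fst.ae hμ] with x hx
      rw [integral_kerA_kerB hs hs1 hx]
      ring
    have hw1 : 0 < s^(t-1) := by positivity
    have hw2 : s^(1-t) = (s^(t-1))⁻¹ := by rw [← Real.rpow_neg hs.le]; congr 1; ring
    have k : ∫ w, (∫ p, kerA s p w ∂μ) * (∫ q, kerB s q w ∂ν) ∂kap ≤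
        (l * (s^(t-1) * ∫ w, (∫ p, kerA s p w ∂μ)^2 ∂kap) +
          l⁻¹ * (s^(1-t) * ∫ w, (∫ q, kerB s q w ∂ν)^2 ∂kap)) / 2 := by
      have i1 := (hAA.2.1.const_mul (l * s^(t-1) / 2))
      have i2 := (hBB.2.1.const_mul (l⁻¹ * s^(1-t) / 2))
      have e' : (l * (s^(t-1) * ∫ w, (∫ p, kerA s p w ∂μ)^2 ∂kap) +
          l⁻¹ * (s^(1-t) * ∫ w, (∫ q, kerB s q w ∂ν)^2 ∂kap)) / 2 =
          ∫ w, (l * s^(t-1) / 2 * ((∫ p, kerA s p w ∂μ) * (∫ p, kerA s p w ∂μ)) +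
           l⁻¹ * s^(1-t) / 2 * ((∫ q, kerB s q w ∂ν) * (∫ q, kerB s q w ∂ν))) ∂kap := by
        rw [integral_add i1 i2, integral_const_mul, integral_const_mul]
        simp only [sq]
        ring
      rw [e']
      refine integral_mono hAB.2.1 (i1.add i2) fun w => ?_
      simp only
      set X := ∫ p, kerA s p w ∂μ
      set Y := ∫ q, kerB s q w ∂ν
      have hm : 0 < l * s^(t-1) := by positivity
      rw [hw2, ← mul_inv]
      set m := l * s^(t-1)
      have : m / 2 * (X * X) + m⁻¹ / 2 * (Y * Y) - X * Y = m⁻¹ / 2 * (m * X - Y)^2 := by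
        field_simp; ring
      have h0 : 0 ≤ m⁻¹ / 2 * (m * X - Y)^2 := by positivity
      linarith
    rw [e]
    linarith

/-! ### Conclusion -/

lemma dist_le_three {q q' : E2} (h0 : |q 0 - q' 0| ≤ 1/4) (h1 : |q 1 - q' 1| ≤ 2) :
    dist q q' ≤ 3 := by
  rw [EuclideanSpace.dist_eq, Fin.sum_univ_two, Real.dist_eq, Real.dist_eq]
  refine Real.sqrt_le_iff.2 ⟨by norm_num, ?_⟩
  nlinarith [abs_nonneg (q 0 - q' 0), abs_nonneg (q 1 - q' 1)]

lemma ae_prod_self {μ : Measure E2} [IsFiniteMeasure μ] {P : E2 → Prop} (h : ∀ᵐ p ∂μ, P p) :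
    ∀ᵐ x ∂(μ.prod μ), P x.1 ∧ P x.2 := by
  filter_upwards [Measure.quasiMeasurePreserving_fst.ae h,
    Measure.quasiMeasurePreserving_snd.ae h] with x h1 h2 using ⟨h1, h2⟩

/-- Optimising `l` in the arithmetic-geometric mean bound. -/
lemma le_sqrt_of_forall {X a b C : ℝ} (ha : 0 < a) (hb : 0 < b)
    (h : ∀ l, 0 < l → X ≤ C * (l * a + l⁻¹ * b)) : X ≤ 2 * C * √(a*b) := by
  have sa := Real.sqrt_pos.2 ha
  have sb := Real.sqrt_pos.2 hb
  refine (h (√b/√a) (by positivity)).trans_eq ?_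
  have qa := Real.sq_sqrt ha.le
  have qb := Real.sq_sqrt hb.le
  rw [Real.sqrt_mul ha.le]
  set x := √a
  set y := √b
  rw [← qa, ← qb]
  field_simp
  ring

/-- The estimate for `θ` in an interval of length `1/4`. There `|sin 2π(θ - θ')| ≳ |θ - θ'|`, and
parallel lines with opposite normals do not occur. -/
lemma incid_le_of_short {t : ℝ} (ht1 : 1 < t) (ht2 : t < 2) :
    ∃ A : ℝ, 0 < A ∧ ∀ (μ ν : Measure E2) [IsFiniteMeasure μ] [IsFiniteMeasure ν],
      (∀ᵐ p ∂μ, ‖p‖ ≤ 1) → ∀ a : ℝ,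
      (∀ᵐ q ∂ν, q 0 ∈ Set.Icc a (a + 1/4) ∧ q 1 ∈ Set.Icc (-1:ℝ) 1) →
      ∀ δ : ℝ, δ ∈ Set.Ioc (0:ℝ) (1/50) →
      incid δ μ ν ≤ ENNReal.ofReal (A * δ) * (riesz (3 - t) μ * riesz t ν) ^ (1/2 : ℝ) := by
  obtain ⟨CA, hCA, hA⟩ := sum_kerA_le (t := t) (by linarith)
  obtain ⟨CB, hCB, hB⟩ := sum_kerB_le ht1 ht2
  set k := kap.real Set.univ
  have hk : 0 ≤ k := measureReal_nonneg
  set C := 9*k + CA + CB with hC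
  have hC0 : 0 < C := by positivity
  refine ⟨8 * (2 * C), by positivity, ?_⟩
  intro μ ν _ _ hμ a hν δ hδ
  obtain ⟨hδ0, hδ1⟩ := hδ
  rcases eq_or_ne μ 0 with rfl | hμ0
  · simp [incid]
  rcases eq_or_ne ν 0 with rfl | hν0
  · simp [incid]
  have hM0 : 0 < μ.real Set.univ := by
    exact ENNReal.toReal_pos (Measure.measure_univ_pos.2 hμ0).ne' (measure_ne_top _ _)
  have hN0 : 0 < ν.real Set.univ := by
    exact ENNReal.toReal_pos (Measure.measure_univ_pos.2 hν0).ne' (measure_ne_top _ _)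
  have dμ : ∀ᵐ x ∂(μ.prod μ), dist x.1 x.2 ≤ 3 := by
    filter_upwards [ae_prod_self hμ] with x hx
    have := dist_le_norm_add_norm x.1 x.2
    linarith [hx.1, hx.2]
  have dν' : ∀ᵐ x ∂(ν.prod ν), |x.1 0 - x.2 0| ≤ 1/4 ∧ |x.1 1 - x.2 1| ≤ 2 := by
    filter_upwards [ae_prod_self hν] with x hx
    obtain ⟨⟨⟨h1, h2⟩, h3, h4⟩, ⟨h5, h6⟩, h7, h8⟩ := hx
    constructor <;> rw [abs_le] <;> constructor <;> linarith
  have dν : ∀ᵐ x ∂(ν.prod ν), dist x.1 x.2 ≤ 3 := by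
    filter_upwards [dν'] with x hx using dist_le_three hx.1 hx.2
  have mμ := mass_sq_le μ (e := 3 - t) (by linarith) (by linarith) dμ
  have mν := mass_sq_le ν (e := t) (by linarith) (by linarith) dν
  have pos : ∀ {x : ℝ} {R : ℝ≥0∞}, 0 < x → ENNReal.ofReal (x^2) ≤ 9 * R → R ≠ 0 := by
    rintro x R hx h rfl
    rw [mul_zero, nonpos_iff_eq_zero, ENNReal.ofReal_eq_zero] at h
    have : 0 < x^2 := by positivity
    linarith
  have pμ := pos hM0 mμ
  have pν := pos hN0 mν
  have hc : ENNReal.ofReal (8 * (2 * C) * δ) ≠ 0 := by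
    rw [Ne, ENNReal.ofReal_eq_zero, not_le]; positivity
  -- both energies are nonzero, so an infinite one makes the right-hand side infinite
  by_cases fμ : riesz (3 - t) μ = ⊤
  · rw [fμ, ENNReal.top_mul pν, ENNReal.top_rpow_of_pos (by norm_num), ENNReal.mul_top hc]
    exact le_top
  by_cases fν : riesz t ν = ⊤
  · rw [fν, ENNReal.mul_top pμ, ENNReal.top_rpow_of_pos (by norm_num), ENNReal.mul_top hc]
    exact le_top
  set I := (riesz (3 - t) μ).toReal with hI
  set J := (riesz t ν).toReal with hJ
  have hI0 : 0 < I := ENNReal.toReal_pos pμ fμ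
  have hJ0 : 0 < J := ENNReal.toReal_pos pν fν
  have eI : riesz (3 - t) μ = ENNReal.ofReal I := (ENNReal.ofReal_toReal fμ).symm
  have eJ : riesz t ν = ENNReal.ofReal J := (ENNReal.ofReal_toReal fν).symm
  have toR : ∀ {x c R : ℝ}, 0 < c → 0 < R →
      ENNReal.ofReal x ≤ ENNReal.ofReal c * ENNReal.ofReal R → x ≤ c * R := by
    intro x c R hc hR h
    rw [← ENNReal.ofReal_mul hc.le] at h
    exact (ENNReal.ofReal_le_ofReal_iff (by positivity)).1 h
  rw [eI, show (9:ℝ≥0∞) = ENNReal.ofReal 9 by simp] at mμ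
  rw [eJ, show (9:ℝ≥0∞) = ENNReal.ofReal 9 by simp] at mν
  have mμ' := toR (by norm_num) hI0 mμ
  have mν' := toR (by norm_num) hJ0 mν
  -- the dyadic scale comparable to `δ` with `4δ ≤ s < 8δ`
  obtain ⟨n, hn1, hn2⟩ := exists_nat_pow_near_of_lt_one (x := 4*δ) (y := (1:ℝ)/2)
    (by linarith) (by linarith) (by norm_num) (by norm_num)
  have hs : (0:ℝ) < (1/2)^n := by positivity
  have hs1 : ((1:ℝ)/2)^n ≤ 1 := pow_le_one₀ (by norm_num) (by norm_num)
  have hs8 : ((1:ℝ)/2)^n ≤ 8*δ := by rw [pow_succ] at hn1; linarith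
  have EA := energy_le μ n (fun j => (((1:ℝ)/2)^(j+1))^(t-1)) (fun j => kerA ((1/2)^(j+1)))
    (fun j => measurable_kerA _) (fun j => 2/((1/2)^(j+1))^2)
    (fun j p w => by
      rw [abs_of_nonneg (kerA_nonneg _ _ _)]
      exact kerA_le (by positivity) p w)
    (e := 3 - t) hCA (by linarith) (Filter.Eventually.of_forall fun x hx => hA n x.1 x.2 hx)
  have EB := energy_le ν n (fun j => (((1:ℝ)/2)^(j+1))^(1-t)) (fun j => kerB ((1/2)^(j+1)))
    (fun j => measurable_kerB _) (fun j => 2/(1/2)^(j+1))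
    (fun j q w => abs_kerB_le (by positivity) q w)
    (e := t) hCB (by linarith) (by
      filter_upwards [dν'] with x hx hx0 using hB n x.1 x.2 hx.1 hx0)
  rw [eI] at EA
  rw [eJ] at EB
  have EA' := toR hCA hI0 EA
  have EB' := toR hCB hJ0 EB
  have key : ∫ x, phi ((1/2)^n) ((1/2)^n) x.1 x.2 ∂(μ.prod ν) ≤ 2 * C * √(I*J) := by
    refine le_sqrt_of_forall hI0 hJ0 fun l hl => (integral_phi_le t μ ν hμ n hl).trans ?_
    have hl' : 0 < l⁻¹ := by positivity
    set M := μ.real Set.univ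
    set N := ν.real Set.univ
    have hMN : 2 * (M * N) ≤ l * M^2 + l⁻¹ * N^2 := by
      have : l * M^2 + l⁻¹ * N^2 - 2 * (M * N) = l⁻¹ * (l*M - N)^2 := by field_simp; ring
      have : 0 ≤ l⁻¹ * (l*M - N)^2 := by positivity
      linarith
    have h1 : 2 * k * (M * N) ≤ k * (l * (9 * I) + l⁻¹ * (9 * J)) := by
      calc 2 * k * (M * N) = k * (2 * (M * N)) := by ring
        _ ≤ k * (l * M^2 + l⁻¹ * N^2) := by gcongr
        _ ≤ _ := by gcongr
    have h2 := mul_le_mul_of_nonneg_left EA' hl.le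
    have h3 := mul_le_mul_of_nonneg_left EB' hl'.le
    have p1 : 0 ≤ l * I := by positivity
    have p2 : 0 ≤ l⁻¹ * J := by positivity
    have p3 : 0 ≤ CA * (l * I) := by positivity
    have p4 : 0 ≤ CB * (l⁻¹ * J) := by positivity
    have p5 : 0 ≤ CB * (l * I) := by positivity
    have p6 : 0 ≤ CA * (l⁻¹ * J) := by positivity
    have e : C * (l * I + l⁻¹ * J) = k * (l * (9 * I) + l⁻¹ * (9 * J)) + CA * (l * I)
        + CB * (l⁻¹ * J) + CB * (l * I) + CA * (l⁻¹ * J) := by rw [hC]; ring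
    rw [e]
    linarith
  refine (incid_le μ ν hμ hs hs1 (by linarith)).trans ?_
  rw [eI, eJ, ← ENNReal.ofReal_mul hI0.le, ENNReal.ofReal_rpow_of_pos (by positivity),
    ← Real.sqrt_eq_rpow, ← ENNReal.ofReal_mul (by positivity)]
  refine ENNReal.ofReal_le_ofReal ?_
  calc (1/2)^n * ∫ x, phi ((1/2)^n) ((1/2)^n) x.1 x.2 ∂(μ.prod ν)
      ≤ (1/2)^n * (2 * C * √(I*J)) := by gcongr
    _ ≤ (8*δ) * (2 * C * √(I*J)) := by gcongr
    _ = _ := by ring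

lemma riesz_mono (s : ℝ) {μ ν : Measure E2} (h : μ ≤ ν) : riesz s μ ≤ riesz s ν :=
  lintegral_mono' h fun _ => lintegral_mono' h le_rfl

/-- The incidence estimate `I_δ(μ, ν) ≲_t δ √(I_{3-t}(μ) I_t(ν))`. -/
theorem stmt7 (t : ℝ) (ht : t ∈ Set.Ioo (1:ℝ) 2) :
    ∃ A : ℝ, 0 < A ∧ ∀ (μ ν : Measure E2),
      μ Set.univ < ⊤ → ν Set.univ < ⊤ →
      μ (closedBall (0:E2) 1)ᶜ = 0 →
      ν {q : E2 | q 0 ∈ Set.Icc (1/4:ℝ) (3/4) ∧ q 1 ∈ Set.Icc (-1:ℝ) 1}ᶜ = 0 →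
      ∀ δ : ℝ, δ ∈ Set.Ioc (0:ℝ) (1/50) →
      incid δ μ ν ≤ ENNReal.ofReal (A * δ) * (riesz (3 - t) μ * riesz t ν) ^ (1/2 : ℝ) := by
  obtain ⟨A, hA, H⟩ := incid_le_of_short ht.1 ht.2
  refine ⟨2 * A, by positivity, ?_⟩
  intro μ ν fμ fν sμ sν δ hδ
  have : IsFiniteMeasure μ := ⟨fμ⟩
  have : IsFiniteMeasure ν := ⟨fν⟩
  have hμ : ∀ᵐ p ∂μ, ‖p‖ ≤ 1 := by
    have : ∀ᵐ p ∂μ, p ∈ closedBall (0:E2) 1 := mem_ae_iff.2 sμ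
    filter_upwards [this] with p hp using mem_closedBall_zero_iff.1 hp
  have hν : ∀ᵐ q ∂ν, q 0 ∈ Set.Icc (1/4:ℝ) (3/4) ∧ q 1 ∈ Set.Icc (-1:ℝ) 1 := mem_ae_iff.2 sν
  -- cut the range of directions at `θ = 1/2`
  have hT : MeasurableSet {q : E2 | q 0 ≤ 1/2} :=
    measurableSet_le (by fun_prop) measurable_const
  set T := {q : E2 | q 0 ≤ 1/2}
  have b1 := H μ (ν.restrict T) hμ (1/4) (by
    filter_upwards [ae_restrict_of_ae hν, ae_restrict_mem hT] with q hq hq2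
    have : q 0 ≤ 1/2 := hq2
    exact ⟨⟨hq.1.1, by linarith⟩, hq.2⟩) δ hδ
  have b2 := H μ (ν.restrict Tᶜ) hμ (1/2) (by
    filter_upwards [ae_restrict_of_ae hν, ae_restrict_mem hT.compl] with q hq hq2
    have : ¬ q 0 ≤ 1/2 := hq2
    exact ⟨⟨by linarith, by linarith [hq.1.2]⟩, hq.2⟩) δ hδ
  have mono : ∀ S : Set E2, ENNReal.ofReal (A * δ) *
      (riesz (3 - t) μ * riesz t (ν.restrict S)) ^ (1/2 : ℝ) ≤
      ENNReal.ofReal (A * δ) * (riesz (3 - t) μ * riesz t ν) ^ (1/2 : ℝ) := fun S => by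
    gcongr
    exact riesz_mono t Measure.restrict_le_self
  have split : incid δ μ ν = incid δ μ (ν.restrict T) + incid δ μ (ν.restrict Tᶜ) := by
    unfold incid
    rw [← Measure.add_apply, ← Measure.prod_add, Measure.restrict_add_restrict_compl hT]
  rw [split, mul_assoc 2 A δ, ENNReal.ofReal_mul (by norm_num), mul_assoc,
    show ENNReal.ofReal 2 = 2 by simp, two_mul]
  exact add_le_add (b1.trans (mono _)) (b2.trans (mono _))
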